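/- Let H > 0 and t ∈ (0, 1/(4H)). Set g(ρ) = Hρ + t/ρ, r₁(t) = (1 − √(1 − 4tH))/(2H) and r₂(t) = (1 + √(1 − 4tH))/(2H). Then 0 < g(ρ) < 1 for every ρ ∈ (r₁(t), r₂(t)), and the function f(r) = ∫_{1/(2H)}^{r} g(ρ)/√(1 − g(ρ)²) dρ is well defined and C² on (r₁(t), r₂(t)) with f(1/(2H)) = 0 and f'/√(1+f'²) = g. Moreover, the radially symmetric function h_t(x,y) = f(√(x² + y²)) is a solution of (CMC) on the open annulus {(x,y) : r₁(t) < √(x² + y²) < r₂(t)}. -/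

import Mathlib

/-!
Write a radial graph as `z = f(r)` and let `θ` be the inclination angle of its meridian, so that
`f' = tan θ` and `g = sin θ = f' / √(1 + f'²)`. The vector field `∇u / √(1 + |∇u|²)` is then
`(g(r) / r) (x, y)`, whose divergence is `g' + g / r = (r g)' / r`. Hence constant mean curvature
`H` means `(r g)' = 2 H r`, i.e. `g = H r + t / r`, and conversely any such `g` with `|g| < 1`
yields a solution by integrating `f' = tan (arcsin g) = g / √(1 - g²)`.
-/

open Real MeasureTheory Filter Set

noncomputable section

/-- Euclidean norm on `ℝ × ℝ`. -/
def enorm2 (p : ℝ × ℝ) : ℝ := Real.sqrt (p.1 ^ 2 + p.2 ^ 2)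

/-- Partial derivative in the `x` direction. -/
def pdx (u : ℝ × ℝ → ℝ) (p : ℝ × ℝ) : ℝ := fderiv ℝ u p (1, 0)

/-- Partial derivative in the `y` direction. -/
def pdy (u : ℝ × ℝ → ℝ) (p : ℝ × ℝ) : ℝ := fderiv ℝ u p (0, 1)

/-- The area element `W_u = √(1 + |∇u|²)`. -/
def Wgraph (u : ℝ × ℝ → ℝ) (p : ℝ × ℝ) : ℝ :=
  Real.sqrt (1 + (pdx u p) ^ 2 + (pdy u p) ^ 2)

/-- Upward unit normal of the graph of `u`. -/
def normalVec (u : ℝ × ℝ → ℝ) (p : ℝ × ℝ) : ℝ × ℝ × ℝ :=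
  (-pdx u p / Wgraph u p, -pdy u p / Wgraph u p, 1 / Wgraph u p)

/-- `u` is a (C²) solution of the constant mean curvature `H` equation on `Ω`. -/
def IsCMCSolution (H : ℝ) (Ω : Set (ℝ × ℝ)) (u : ℝ × ℝ → ℝ) : Prop :=
  ContDiffOn ℝ 2 u Ω ∧ ∀ p ∈ Ω,
    (1 + (pdy u p) ^ 2) * pdx (fun q => pdx u q) p
      - 2 * (pdx u p) * (pdy u p) * pdy (fun q => pdx u q) p
      + (1 + (pdx u p) ^ 2) * pdy (fun q => pdy u q) p
    = 2 * H * (1 + (pdx u p) ^ 2 + (pdy u p) ^ 2) ^ ((3 : ℝ) / 2)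

/-- `C` is a divergence line of the sequence `u` on `Ω`. -/
def IsDivergenceLine (H : ℝ) (Ω : Set (ℝ × ℝ)) (u : ℕ → ℝ × ℝ → ℝ)
    (C : Set (ℝ × ℝ)) : Prop :=
  ∃ z₁ : ℝ × ℝ, C ⊆ Ω ∧ (∀ q ∈ C, enorm2 (q - z₁) = 1 / (2 * H)) ∧
    IsConnected C ∧ C.Nontrivial ∧
    ∃ φ : ℕ → ℕ, StrictMono φ ∧ ∀ Q ∈ C,
      Tendsto (fun n => normalVec (u (φ n)) Q) atTop
        (nhds (2 * H * (z₁.1 - Q.1), 2 * H * (z₁.2 - Q.2), 0))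

/-- `g(ρ) = Hρ + t/ρ`. -/
def gfun (H t ρ : ℝ) : ℝ := H * ρ + t / ρ

/-- Inner radius of the annulus of definition. -/
def r1 (H t : ℝ) : ℝ := (1 - Real.sqrt (1 - 4 * t * H)) / (2 * H)

/-- Outer radius of the annulus of definition. -/
def r2 (H t : ℝ) : ℝ := (1 + Real.sqrt (1 - 4 * t * H)) / (2 * H)

/-- The radial profile `f(r) = ∫_{1/(2H)}^r g(ρ)/√(1-g(ρ)²) dρ`. -/
def ffun (H t r : ℝ) : ℝ :=
  ∫ ρ in (1 / (2 * H))..r, gfun H t ρ / Real.sqrt (1 - (gfun H t ρ) ^ 2)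

/-- The radially symmetric function `h_t(x,y) = f(√(x²+y²))`. -/
def hfun (H t : ℝ) (p : ℝ × ℝ) : ℝ := ffun H t (enorm2 p)

section Primitive

variable {E : Type*} [NormedAddCommGroup E] {I : Set ℝ} [I.OrdConnected]
  {φ : ℝ → E} {c r : ℝ}

lemma intervalIntegrable_of_continuousOn_ordConnected (hφ : ContinuousOn φ I) (hc : c ∈ I)
    (hr : r ∈ I) : IntervalIntegrable φ volume c r :=
  (hφ.mono (OrdConnected.uIcc_subset ‹_› hc hr)).intervalIntegrable

variable [NormedSpace ℝ E] [CompleteSpace E]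

lemma hasDerivAt_integral_of_continuousOn (hI : IsOpen I) (hφ : ContinuousOn φ I) (hc : c ∈ I)
    (hr : r ∈ I) : HasDerivAt (fun u => ∫ ρ in c..u, φ ρ) (φ r) r :=
  intervalIntegral.integral_hasDerivAt_right
    (intervalIntegrable_of_continuousOn_ordConnected hφ hc hr)
    (hφ.stronglyMeasurableAtFilter hI r hr) (hφ.continuousAt (hI.mem_nhds hr))

lemma contDiffOn_succ_integral {n : ℕ∞} (hI : IsOpen I) (hφ : ContDiffOn ℝ n φ I) (hc : c ∈ I) :
    ContDiffOn ℝ (n + 1) (fun u => ∫ ρ in c..u, φ ρ) I := by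
  have hderiv : ∀ r ∈ I, HasDerivAt (fun u => ∫ ρ in c..u, φ ρ) (φ r) r := fun r hr =>
    hasDerivAt_integral_of_continuousOn hI hφ.continuousOn hc hr
  rw [contDiffOn_succ_iff_deriv_of_isOpen hI]
  exact ⟨fun r hr => (hderiv r hr).differentiableAt.differentiableWithinAt, by simp,
    hφ.congr fun r hr => (hderiv r hr).deriv⟩

end Primitive

section TanArcsin

variable {s : ℝ}

lemma cos_arcsin_pos_of_abs_lt_one (hs : |s| < 1) : 0 < cos (arcsin s) :=
  cos_pos_of_mem_Ioo
    ⟨neg_pi_div_two_lt_arcsin.2 (abs_lt.1 hs).1, arcsin_lt_pi_div_two.2 (abs_lt.1 hs).2⟩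

lemma sin_arcsin_of_abs_lt_one (hs : |s| < 1) : sin (arcsin s) = s :=
  sin_arcsin (abs_lt.1 hs).1.le (abs_lt.1 hs).2.le

lemma tan_arcsin_div_sqrt_one_add_sq (hs : |s| < 1) :
    tan (arcsin s) / √(1 + tan (arcsin s) ^ 2) = s := by
  rw [tan_div_sqrt_one_add_tan_sq (cos_arcsin_pos_of_abs_lt_one hs), sin_arcsin_of_abs_lt_one hs]

lemma contDiffAt_tan_arcsin {n : WithTop ℕ∞} (hs : |s| < 1) :
    ContDiffAt ℝ n (fun x => tan (arcsin x)) s :=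
  (contDiffAt_tan.2 (cos_arcsin_pos_of_abs_lt_one hs).ne').comp s
    (contDiffAt_arcsin (abs_lt.1 hs).1.ne' (abs_lt.1 hs).2.ne)

lemma hasDerivAt_tan_arcsin (hs : |s| < 1) :
    HasDerivAt (fun x => tan (arcsin x)) (1 / cos (arcsin s) ^ 3) s := by
  have harcsin := hasDerivAt_arcsin (abs_lt.1 hs).1.ne' (abs_lt.1 hs).2.ne
  rw [← cos_arcsin] at harcsin
  refine ((hasDerivAt_tan (cos_arcsin_pos_of_abs_lt_one hs).ne').comp s harcsin).congr_deriv ?_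
  rw [one_div_mul_one_div, ← pow_succ]

lemma contDiffOn_tan_arcsin_comp {n : WithTop ℕ∞} {I : Set ℝ} {g : ℝ → ℝ}
    (hg : ContDiffOn ℝ n g I) (hlt : ∀ r ∈ I, |g r| < 1) :
    ContDiffOn ℝ n (fun r => tan (arcsin (g r))) I :=
  fun r hr => (contDiffAt_tan_arcsin (hlt r hr)).comp_contDiffWithinAt r (hg r hr)

end TanArcsin

lemma one_add_tan_sq_rpow_three_halves {θ : ℝ} (hθ : 0 < cos θ) :
    (1 + tan θ ^ 2) ^ ((3 : ℝ) / 2) = 1 / cos θ ^ 3 := by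
  rw [rpow_div_two_eq_sqrt 3 (by positivity), ← inv_inv (√(1 + tan θ ^ 2)),
    inv_sqrt_one_add_tan_sq hθ, ← Nat.cast_ofNat, rpow_natCast, inv_pow, one_div]

section Radial

variable {p : ℝ × ℝ}

lemma continuous_enorm2 : Continuous enorm2 := by
  unfold enorm2
  fun_prop

lemma enorm2_sq (p : ℝ × ℝ) : enorm2 p ^ 2 = p.1 ^ 2 + p.2 ^ 2 :=
  sq_sqrt (by positivity)

lemma contDiffAt_enorm2 {n : WithTop ℕ∞} (hp : 0 < enorm2 p) : ContDiffAt ℝ n enorm2 p :=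
  ((contDiffAt_fst.pow 2).add (contDiffAt_snd.pow 2)).sqrt (sqrt_pos.1 hp).ne'

lemma fderiv_enorm2_apply (hp : 0 < enorm2 p) (v : ℝ × ℝ) :
    fderiv ℝ enorm2 p v = (p.1 * v.1 + p.2 * v.2) / enorm2 p := by
  have hsum : HasFDerivAt (fun q : ℝ × ℝ => q.1 ^ 2 + q.2 ^ 2) _ p :=
    (hasFDerivAt_fst.pow 2).add ((hasFDerivAt_snd (𝕜 := ℝ) (p := p)).pow 2)
  have hnorm : HasFDerivAt enorm2 _ p := hsum.sqrt (sqrt_pos.1 hp).ne'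
  rw [hnorm.fderiv, ← enorm2_sq, sqrt_sq hp.le]
  simp only [one_div, mul_inv_rev, Nat.add_one_sub_one, pow_one, nsmul_eq_mul, Nat.cast_ofNat,
    smul_add, add_apply, smul_apply, ContinuousLinearMap.coe_fst', smul_eq_mul,
    ContinuousLinearMap.coe_snd']
  field_simp

lemma fderiv_comp_enorm2_apply {ψ : ℝ → ℝ} (hp : 0 < enorm2 p)
    (hψ : DifferentiableAt ℝ ψ (enorm2 p)) (v : ℝ × ℝ) :
    fderiv ℝ (fun q => ψ (enorm2 q)) p v =
      deriv ψ (enorm2 p) / enorm2 p * (p.1 * v.1 + p.2 * v.2) := by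
  have hnorm : DifferentiableAt ℝ enorm2 p :=
    (contDiffAt_enorm2 (n := 1) hp).differentiableAt one_ne_zero
  have hcomp : HasFDerivAt (fun q => ψ (enorm2 q)) _ p :=
    hψ.hasDerivAt.comp_hasFDerivAt p hnorm.hasFDerivAt
  rw [hcomp.fderiv, smul_apply, fderiv_enorm2_apply hp, smul_eq_mul]
  ring

lemma fderiv_comp_enorm2_mul_apply {ψ : ℝ → ℝ} (hp : 0 < enorm2 p)
    (hψ : DifferentiableAt ℝ ψ (enorm2 p)) (L : ℝ × ℝ →L[ℝ] ℝ) (v : ℝ × ℝ) :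
    fderiv ℝ (fun q => ψ (enorm2 q) * L q) p v =
      deriv ψ (enorm2 p) / enorm2 p * (p.1 * v.1 + p.2 * v.2) * L p + ψ (enorm2 p) * L v := by
  have hradial : DifferentiableAt ℝ (fun q => ψ (enorm2 q)) p :=
    hψ.comp p ((contDiffAt_enorm2 (n := 1) hp).differentiableAt one_ne_zero)
  rw [fderiv_fun_mul hradial L.differentiableAt]
  simp only [L.fderiv, add_apply, smul_apply, smul_eq_mul, fderiv_comp_enorm2_apply hp hψ]
  ring

lemma pdx_comp_enorm2 {f : ℝ → ℝ} (hp : 0 < enorm2 p) (hf : DifferentiableAt ℝ f (enorm2 p)) :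
    pdx (fun q => f (enorm2 q)) p = deriv f (enorm2 p) / enorm2 p * p.1 := by
  rw [pdx, fderiv_comp_enorm2_apply hp hf]
  ring

lemma pdy_comp_enorm2 {f : ℝ → ℝ} (hp : 0 < enorm2 p) (hf : DifferentiableAt ℝ f (enorm2 p)) :
    pdy (fun q => f (enorm2 q)) p = deriv f (enorm2 p) / enorm2 p * p.2 := by
  rw [pdy, fderiv_comp_enorm2_apply hp hf]
  ring

lemma one_add_gradient_sq_comp_enorm2 {f : ℝ → ℝ} (hp : 0 < enorm2 p)
    (hf : DifferentiableAt ℝ f (enorm2 p)) :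
    1 + pdx (fun q => f (enorm2 q)) p ^ 2 + pdy (fun q => f (enorm2 q)) p ^ 2 =
      1 + deriv f (enorm2 p) ^ 2 := by
  rw [pdx_comp_enorm2 hp hf, pdy_comp_enorm2 hp hf]
  field_simp
  rw [enorm2_sq]
  ring

lemma eventually_pos_and_differentiableAt_enorm2 {f : ℝ → ℝ} (hp : 0 < enorm2 p)
    (hf : ContDiffAt ℝ 2 f (enorm2 p)) :
    ∀ᶠ q in nhds p, 0 < enorm2 q ∧ DifferentiableAt ℝ f (enorm2 q) := by
  have hf' : ∀ᶠ r in nhds (enorm2 p), 0 < r ∧ DifferentiableAt ℝ f r :=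
    (lt_mem_nhds hp).and
      ((hf.eventually (by simp)).mono fun r hr => hr.differentiableAt two_ne_zero)
  exact continuous_enorm2.continuousAt.eventually hf'

lemma pdx_comp_enorm2_eventuallyEq {f : ℝ → ℝ} (hp : 0 < enorm2 p)
    (hf : ContDiffAt ℝ 2 f (enorm2 p)) :
    pdx (fun q => f (enorm2 q)) =ᶠ[nhds p]
      fun q => deriv f (enorm2 q) / enorm2 q * ContinuousLinearMap.fst ℝ ℝ ℝ q :=
  (eventually_pos_and_differentiableAt_enorm2 hp hf).mono fun _ hq => pdx_comp_enorm2 hq.1 hq.2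

lemma pdy_comp_enorm2_eventuallyEq {f : ℝ → ℝ} (hp : 0 < enorm2 p)
    (hf : ContDiffAt ℝ 2 f (enorm2 p)) :
    pdy (fun q => f (enorm2 q)) =ᶠ[nhds p]
      fun q => deriv f (enorm2 q) / enorm2 q * ContinuousLinearMap.snd ℝ ℝ ℝ q :=
  (eventually_pos_and_differentiableAt_enorm2 hp hf).mono fun _ hq => pdy_comp_enorm2 hq.1 hq.2

lemma differentiableAt_deriv_div_id {f : ℝ → ℝ} {r : ℝ} (hr : r ≠ 0) (hf : ContDiffAt ℝ 2 f r) :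
    DifferentiableAt ℝ (fun s => deriv f s / s) r :=
  ((ContDiffAt.derivWithin hf one_add_one_eq_two.le).differentiableAt one_ne_zero).fun_div
    differentiableAt_id hr

lemma deriv_deriv_div_id {f : ℝ → ℝ} {r : ℝ} (hr : r ≠ 0) (hf : ContDiffAt ℝ 2 f r) :
    deriv (fun s => deriv f s / s) r = (deriv (deriv f) r - deriv f r / r) / r := by
  have hf' : DifferentiableAt ℝ (deriv f) r :=
    (ContDiffAt.derivWithin hf one_add_one_eq_two.le).differentiableAt one_ne_zero
  rw [(hf'.hasDerivAt.fun_div (hasDerivAt_id' r) hr).deriv]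
  field_simp

lemma fderiv_pdx_comp_enorm2_apply {f : ℝ → ℝ} (hp : 0 < enorm2 p)
    (hf : ContDiffAt ℝ 2 f (enorm2 p)) (v : ℝ × ℝ) :
    fderiv ℝ (pdx fun q => f (enorm2 q)) p v =
      deriv (fun s => deriv f s / s) (enorm2 p) / enorm2 p * (p.1 * v.1 + p.2 * v.2) * p.1
        + deriv f (enorm2 p) / enorm2 p * v.1 := by
  rw [(pdx_comp_enorm2_eventuallyEq hp hf).fderiv_eq]
  exact fderiv_comp_enorm2_mul_apply hp (differentiableAt_deriv_div_id hp.ne' hf) _ v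

lemma fderiv_pdy_comp_enorm2_apply {f : ℝ → ℝ} (hp : 0 < enorm2 p)
    (hf : ContDiffAt ℝ 2 f (enorm2 p)) (v : ℝ × ℝ) :
    fderiv ℝ (pdy fun q => f (enorm2 q)) p v =
      deriv (fun s => deriv f s / s) (enorm2 p) / enorm2 p * (p.1 * v.1 + p.2 * v.2) * p.2
        + deriv f (enorm2 p) / enorm2 p * v.2 := by
  rw [(pdy_comp_enorm2_eventuallyEq hp hf).fderiv_eq]
  exact fderiv_comp_enorm2_mul_apply hp (differentiableAt_deriv_div_id hp.ne' hf) _ v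

lemma cmc_operator_comp_enorm2 {f : ℝ → ℝ} (hp : 0 < enorm2 p)
    (hf : ContDiffAt ℝ 2 f (enorm2 p)) :
    let u : ℝ × ℝ → ℝ := fun q => f (enorm2 q)
    (1 + pdy u p ^ 2) * pdx (fun q => pdx u q) p
      - 2 * pdx u p * pdy u p * pdy (fun q => pdx u q) p
      + (1 + pdx u p ^ 2) * pdy (fun q => pdy u q) p =
    deriv (deriv f) (enorm2 p)
      + deriv f (enorm2 p) * (1 + deriv f (enorm2 p) ^ 2) / enorm2 p := by
  intro u
  -- With ψ r = deriv f r / r the gradient is ψ(r) p and the Hessian ψ(r) I + (deriv ψ r / r) p pᵀ.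
  have hf₁ : DifferentiableAt ℝ f (enorm2 p) := hf.differentiableAt two_ne_zero
  have hxx : pdx (fun q => pdx u q) p = _ := fderiv_pdx_comp_enorm2_apply hp hf (1, 0)
  have hxy : pdy (fun q => pdx u q) p = _ := fderiv_pdx_comp_enorm2_apply hp hf (0, 1)
  have hyy : pdy (fun q => pdy u q) p = _ := fderiv_pdy_comp_enorm2_apply hp hf (0, 1)
  rw [hxx, hxy, hyy, pdx_comp_enorm2 hp hf₁, pdy_comp_enorm2 hp hf₁,
    deriv_deriv_div_id hp.ne' hf]
  field_simp
  linear_combination (enorm2 p ^ 2 * (deriv f (enorm2 p) - deriv f (enorm2 p) ^ 3)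
    - enorm2 p ^ 3 * deriv (deriv f) (enorm2 p)) * enorm2_sq p

theorem isCMCSolution_comp_enorm2 {H : ℝ} {I : Set ℝ} {f : ℝ → ℝ} (hI : IsOpen I)
    (hpos : ∀ r ∈ I, 0 < r) (hf : ContDiffOn ℝ 2 f I)
    (hode : ∀ r ∈ I, deriv (deriv f) r + deriv f r * (1 + deriv f r ^ 2) / r =
      2 * H * (1 + deriv f r ^ 2) ^ ((3 : ℝ) / 2)) :
    IsCMCSolution H (enorm2 ⁻¹' I) (fun p => f (enorm2 p)) := by
  refine ⟨hf.comp (fun p hp => (contDiffAt_enorm2 (hpos _ hp)).contDiffWithinAt) fun p hp => hp,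
    fun p hp => ?_⟩
  have hfp : ContDiffAt ℝ 2 f (enorm2 p) := hf.contDiffAt (hI.mem_nhds hp)
  rw [cmc_operator_comp_enorm2 (hpos _ hp) hfp, hode _ hp,
    one_add_gradient_sq_comp_enorm2 (hpos _ hp) (hfp.differentiableAt two_ne_zero)]

end Radial

/-- The height `r ↦ ∫_c^r tan θ` of the plane curve through `(c, 0)` whose inclination angle `θ`
over `ρ` is given by its sine `g ρ`. The integrand is `g / √(1 - g²)`, by `Real.tan_arcsin`. -/
def meridian (g : ℝ → ℝ) (c r : ℝ) : ℝ :=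
  ∫ ρ in c..r, tan (arcsin (g ρ))

section Meridian

variable {I : Set ℝ} [I.OrdConnected] {g : ℝ → ℝ} {c r : ℝ}

lemma hasDerivAt_meridian (hI : IsOpen I) (hg : ContinuousOn g I) (hlt : ∀ r ∈ I, |g r| < 1)
    (hc : c ∈ I) (hr : r ∈ I) : HasDerivAt (meridian g c) (tan (arcsin (g r))) r :=
  hasDerivAt_integral_of_continuousOn hI
    (contDiffOn_zero.1 (contDiffOn_tan_arcsin_comp (contDiffOn_zero.2 hg) hlt)) hc hr

lemma deriv_meridian_div_sqrt (hI : IsOpen I) (hg : ContinuousOn g I)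
    (hlt : ∀ r ∈ I, |g r| < 1) (hc : c ∈ I) (hr : r ∈ I) :
    deriv (meridian g c) r / √(1 + deriv (meridian g c) r ^ 2) = g r := by
  rw [(hasDerivAt_meridian hI hg hlt hc hr).deriv, tan_arcsin_div_sqrt_one_add_sq (hlt r hr)]

lemma contDiffOn_succ_meridian {n : ℕ∞} (hI : IsOpen I) (hg : ContDiffOn ℝ n g I)
    (hlt : ∀ r ∈ I, |g r| < 1) (hc : c ∈ I) : ContDiffOn ℝ (n + 1) (meridian g c) I :=
  contDiffOn_succ_integral hI (contDiffOn_tan_arcsin_comp hg hlt) hc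

lemma contDiffOn_two_meridian (hI : IsOpen I) (hg : ContDiffOn ℝ 1 g I)
    (hlt : ∀ r ∈ I, |g r| < 1) (hc : c ∈ I) : ContDiffOn ℝ 2 (meridian g c) I :=
  (contDiffOn_succ_meridian (n := 1) hI hg hlt hc).of_le one_add_one_eq_two.ge

lemma deriv_deriv_meridian (hI : IsOpen I) (hg : ContDiffOn ℝ 1 g I)
    (hlt : ∀ r ∈ I, |g r| < 1) (hc : c ∈ I) (hr : r ∈ I) :
    deriv (deriv (meridian g c)) r = deriv g r / cos (arcsin (g r)) ^ 3 := by
  have hderiv : deriv (meridian g c) =ᶠ[nhds r] fun s => tan (arcsin (g s)) :=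
    (hI.eventually_mem hr).mono fun s hs =>
      (hasDerivAt_meridian hI hg.continuousOn hlt hc hs).deriv
  have hg' : DifferentiableAt ℝ g r :=
    (hg.contDiffAt (hI.mem_nhds hr)).differentiableAt one_ne_zero
  have hcomp : HasDerivAt (fun s => tan (arcsin (g s))) _ r :=
    (hasDerivAt_tan_arcsin (hlt r hr)).comp r hg'.hasDerivAt
  rw [hderiv.deriv_eq, hcomp.deriv]
  ring

theorem isCMCSolution_meridian {H : ℝ} (hI : IsOpen I) (hpos : ∀ r ∈ I, 0 < r)
    (hg : ContDiffOn ℝ 1 g I) (hlt : ∀ r ∈ I, |g r| < 1)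
    (hdiv : ∀ r ∈ I, deriv g r + g r / r = 2 * H) (hc : c ∈ I) :
    IsCMCSolution H (enorm2 ⁻¹' I) (fun p => meridian g c (enorm2 p)) := by
  refine isCMCSolution_comp_enorm2 hI hpos (contDiffOn_two_meridian hI hg hlt hc) fun r hr => ?_
  have hcos : 0 < cos (arcsin (g r)) := cos_arcsin_pos_of_abs_lt_one (hlt r hr)
  have hr0 : r ≠ 0 := (hpos r hr).ne'
  rw [deriv_deriv_meridian hI hg hlt hc hr,
    (hasDerivAt_meridian hI hg.continuousOn hlt hc hr).deriv,
    one_add_tan_sq_rpow_three_halves hcos, ← inv_inv (1 + tan (arcsin (g r)) ^ 2),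
    inv_one_add_tan_sq hcos.ne', tan_eq_sin_div_cos, sin_arcsin_of_abs_lt_one (hlt r hr),
    ← hdiv r hr]
  field_simp

end Meridian

section Profile

variable {H t ρ : ℝ}

lemma mem_Ioo_r1_r2_iff (hH : 0 < H) :
    ρ ∈ Ioo (r1 H t) (r2 H t) ↔ H * ρ ^ 2 + t < ρ := by
  calc ρ ∈ Ioo (r1 H t) (r2 H t)
      ↔ -√(1 - 4 * t * H) < 2 * H * ρ - 1 ∧ 2 * H * ρ - 1 < √(1 - 4 * t * H) := by
        rw [mem_Ioo, r1, r2, div_lt_iff₀ (by positivity), lt_div_iff₀ (by positivity)]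
        constructor <;> rintro ⟨h₁, h₂⟩ <;> constructor <;> linarith
    _ ↔ (2 * H * ρ - 1) ^ 2 < 1 - 4 * t * H := sq_lt.symm
    _ ↔ 4 * H * (H * ρ ^ 2 + t) < 4 * H * ρ := by
        constructor <;> intro h <;> linarith
    _ ↔ H * ρ ^ 2 + t < ρ := mul_lt_mul_iff_right₀ (by positivity)

lemma one_div_two_mul_mem_Ioo_r1_r2 (hH : 0 < H) (ht : t < 1 / (4 * H)) :
    1 / (2 * H) ∈ Ioo (r1 H t) (r2 H t) := by
  rw [mem_Ioo_r1_r2_iff hH]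
  calc H * (1 / (2 * H)) ^ 2 + t < H * (1 / (2 * H)) ^ 2 + 1 / (4 * H) := by gcongr
    _ = 1 / (2 * H) := by field_simp; norm_num

lemma pos_of_mem_Ioo_r1_r2 (hH : 0 < H) (ht : 0 ≤ t) (hρ : ρ ∈ Ioo (r1 H t) (r2 H t)) :
    0 < ρ :=
  lt_of_le_of_lt (by positivity) ((mem_Ioo_r1_r2_iff hH).1 hρ)

lemma gfun_pos (hH : 0 < H) (ht : 0 ≤ t) (hρ : 0 < ρ) : 0 < gfun H t ρ := by
  unfold gfun
  positivity

lemma gfun_lt_one (hH : 0 < H) (hρ0 : 0 < ρ) (hρ : ρ ∈ Ioo (r1 H t) (r2 H t)) :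
    gfun H t ρ < 1 := by
  calc gfun H t ρ = (H * ρ ^ 2 + t) / ρ := by unfold gfun; field_simp
    _ < 1 := (div_lt_one hρ0).2 ((mem_Ioo_r1_r2_iff hH).1 hρ)

lemma contDiffAt_gfun {n : WithTop ℕ∞} (hρ : ρ ≠ 0) : ContDiffAt ℝ n (gfun H t) ρ :=
  (contDiffAt_const.mul contDiffAt_id).add (contDiffAt_const.div contDiffAt_id hρ)

lemma hasDerivAt_gfun (hρ : ρ ≠ 0) : HasDerivAt (gfun H t) (H - t / ρ ^ 2) ρ := by
  refine (((hasDerivAt_id' ρ).const_mul H).add ((hasDerivAt_inv hρ).const_mul t)).congr_deriv ?_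
  ring

lemma deriv_gfun_add_gfun_div (hρ : ρ ≠ 0) :
    deriv (gfun H t) ρ + gfun H t ρ / ρ = 2 * H := by
  rw [(hasDerivAt_gfun hρ).deriv, gfun]
  field_simp
  ring

lemma ffun_eq_meridian (H t : ℝ) : ffun H t = meridian (gfun H t) (1 / (2 * H)) := by
  ext r
  simp only [ffun, meridian, tan_arcsin]

lemma hfun_eq_meridian_comp_enorm2 (H t : ℝ) :
    hfun H t = fun p => meridian (gfun H t) (1 / (2 * H)) (enorm2 p) := by
  ext p
  rw [hfun, ffun_eq_meridian]

end Profile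

/-- for `0 < t < 1/(4H)`, the radial profile `f` is well defined and C² on
`(r₁(t), r₂(t))`, vanishes at `1/(2H)`, satisfies `f'/√(1+f'²) = g`, and `h_t` is a
solution of (CMC) on the annulus `{r₁(t) < √(x²+y²) < r₂(t)}`. -/
theorem stmt_15 (H t : ℝ) (hH : 0 < H) (ht : t ∈ Set.Ioo 0 (1 / (4 * H))) :
    (∀ ρ ∈ Set.Ioo (r1 H t) (r2 H t), 0 < gfun H t ρ ∧ gfun H t ρ < 1) ∧
    (∀ r ∈ Set.Ioo (r1 H t) (r2 H t),
      IntervalIntegrable (fun ρ => gfun H t ρ / Real.sqrt (1 - (gfun H t ρ) ^ 2))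
        volume (1 / (2 * H)) r) ∧
    ContDiffOn ℝ 2 (ffun H t) (Set.Ioo (r1 H t) (r2 H t)) ∧
    ffun H t (1 / (2 * H)) = 0 ∧
    (∀ r ∈ Set.Ioo (r1 H t) (r2 H t),
      deriv (ffun H t) r / Real.sqrt (1 + (deriv (ffun H t) r) ^ 2) = gfun H t r) ∧
    IsCMCSolution H {p : ℝ × ℝ | r1 H t < enorm2 p ∧ enorm2 p < r2 H t} (hfun H t) := by
  set I := Ioo (r1 H t) (r2 H t)
  have hI : IsOpen I := isOpen_Ioo
  have hc : 1 / (2 * H) ∈ I := one_div_two_mul_mem_Ioo_r1_r2 hH ht.2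
  have hpos : ∀ ρ ∈ I, 0 < ρ := fun ρ => pos_of_mem_Ioo_r1_r2 hH ht.1.le
  have hbounds : ∀ ρ ∈ I, 0 < gfun H t ρ ∧ gfun H t ρ < 1 := fun ρ hρ =>
    ⟨gfun_pos hH ht.1.le (hpos ρ hρ), gfun_lt_one hH (hpos ρ hρ) hρ⟩
  have habs : ∀ ρ ∈ I, |gfun H t ρ| < 1 := fun ρ hρ =>
    (abs_of_pos (hbounds ρ hρ).1).trans_lt (hbounds ρ hρ).2
  have hg : ContDiffOn ℝ 1 (gfun H t) I := fun ρ hρ =>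
    (contDiffAt_gfun (hpos ρ hρ).ne').contDiffWithinAt
  simp only [hfun_eq_meridian_comp_enorm2, ffun_eq_meridian, ← tan_arcsin]
  exact ⟨hbounds,
    fun r => intervalIntegrable_of_continuousOn_ordConnected
      (contDiffOn_tan_arcsin_comp hg habs).continuousOn hc,
    contDiffOn_two_meridian hI hg habs hc,
    intervalIntegral.integral_same,
    fun r => deriv_meridian_div_sqrt hI hg.continuousOn habs hc,
    isCMCSolution_meridian hI hpos hg habs
      (fun ρ hρ => deriv_gfun_add_gfun_div (hpos ρ hρ).ne') hc⟩
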